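/- (Receiver output is the lowest-cost pseudoconfiguration.) Suppose (ḡ*, p*) ∈ Q maximizes the cost λ·g over Q. Then for every positive integer M, every choice of permutations Π_{j,i} of S = {1,…,M} (j ∈ L, i ∈ I_j), and every valid cover configuration x^{(M)} of degree M with normalized pseudoconfiguration vector ḡ' (g'_i^{(α)} = |{l ∈ S : x_{i,l} = α}|/M), one has λ·g* ≥ λ·g'. -/

import Mathlib

open Finset

/-!
The sheet frequencies of the local configurations of a valid cover are distributions `p j` on the
local behaviours. The marginal of `p j` at `i` is the symbol frequency of `x i` read through the
permutation `Π_{j,i}`; a bijection of the sheets does not change frequencies, so this marginal is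
the same for every `j` containing `i`. Hence every valid cover configuration gives a point of `Q`,
and a maximizer over `Q` does at least as well.
-/

section EmpiricalDist

variable (𝕜 : Type*) [Semifield 𝕜] {S β γ : Type*} [Fintype S] [DecidableEq β] [DecidableEq γ]

/-- The empirical distribution of a finite family `f`, i.e. the fraction of indices `s` with
`f s = b`, as a function of `b` (zero when there are no indices). It is used for symbol and
local-configuration frequencies on the sheets of a cover. -/
def empiricalDist (f : S → β) (b : β) : 𝕜 := #{s | f s = b} / Fintype.card S

theorem empiricalDist_nonneg [LinearOrder 𝕜] [IsStrictOrderedRing 𝕜] (f : S → β) (b : β) :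
    0 ≤ empiricalDist 𝕜 f b :=
  div_nonneg (Nat.cast_nonneg _) (Nat.cast_nonneg _)

theorem sum_empiricalDist [CharZero 𝕜] [Nonempty S] [Fintype β] (f : S → β) :
    ∑ b, empiricalDist 𝕜 f b = 1 := by
  have hcard : ∑ b, #{s | f s = b} = Fintype.card S :=
    (card_eq_sum_card_fiberwise fun s _ => mem_univ (f s)).symm
  simp only [empiricalDist, ← sum_div, ← Nat.cast_sum, hcard]
  exact div_self (Nat.cast_ne_zero.mpr Fintype.card_ne_zero)

theorem sum_ite_empiricalDist [Fintype β] (φ : β → γ) (f : S → β) (c : γ) :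
    ∑ b, (if φ b = c then empiricalDist 𝕜 f b else 0) = empiricalDist 𝕜 (φ ∘ f) c := by
  have hcard : ∑ b with φ b = c, #{s | f s = b} = #{s | φ (f s) = c} := by
    rw [card_eq_sum_card_fiberwise (f := f) (t := {b | φ b = c}) (by simp [Set.MapsTo])]
    refine sum_congr rfl fun b hb => ?_
    congr 1
    grind
  simp only [empiricalDist, ← sum_filter, ← sum_div, ← Nat.cast_sum, hcard, Function.comp_apply]

theorem empiricalDist_comp_perm (f : S → β) (σ : Equiv.Perm S) :
    empiricalDist 𝕜 (f ∘ σ) = empiricalDist 𝕜 f := by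
  funext b
  have hcard : #{s | f (σ s) = b} = #{s | f s = b} :=
    card_equiv σ (by simp)
  simp only [empiricalDist, Function.comp_apply, hcard]

end EmpiricalDist

section Cover

variable {I L S : Type*} {A : I → Type*} {Ij : L → Finset I}

/-- The paper's polytope `Q` of pairs `(g, p)`: each `p j` is a probability vector on the local
behaviour `B j`, and its marginal at each `i ∈ Ij j` is `g i`. The scalars may lie in any ordered
semifield. -/
def pseudoconfigPolytope (𝕜 : Type*) [Semifield 𝕜] [LinearOrder 𝕜] [∀ i, DecidableEq (A i)]
    (B : ∀ j, Finset (∀ i : Ij j, A i)) :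
    Set ((∀ i, A i → 𝕜) × (∀ j, B j → 𝕜)) :=
  {gp | (∀ j b, 0 ≤ gp.2 j b)
    ∧ (∀ j, ∑ b : B j, gp.2 j b = 1)
    ∧ ∀ (j : L) (i : I) (hij : i ∈ Ij j) (α : A i),
        gp.1 i α = ∑ b : B j, if b.1 ⟨i, hij⟩ = α then gp.2 j b else 0}

/-- Validity of a cover configuration `x` with sheets `S`: on every sheet, the symbols that the
copy of `j` sees through the permutations `σ j i` form an element of the local behaviour `B j`. -/
def IsValidCover (B : ∀ j, Finset (∀ i : Ij j, A i)) (σ : ∀ j, Ij j → Equiv.Perm S)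
    (x : ∀ i, S → A i) : Prop :=
  ∀ j l, (fun i : Ij j => x i (σ j i l)) ∈ B j

variable {B : ∀ j, Finset (∀ i : Ij j, A i)} {σ : ∀ j, Ij j → Equiv.Perm S} {x : ∀ i, S → A i}

/-- The local configuration `x_{j,l}` of a valid cover, as an element of the local behaviour. -/
def IsValidCover.localConfig (hx : IsValidCover B σ x) (j : L) (l : S) : B j :=
  ⟨fun i => x i (σ j i l), hx j l⟩

variable [Fintype S] [∀ i, DecidableEq (A i)]

theorem IsValidCover.sum_ite_empiricalDist_localConfig (𝕜 : Type*) [Semifield 𝕜]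
    (hx : IsValidCover B σ x) (j : L) (i : Ij j) (α : A i) :
    ∑ b : B j, (if b.1 i = α then empiricalDist 𝕜 (hx.localConfig j) b else 0) =
      empiricalDist 𝕜 (x i) α :=
  calc
    _ = empiricalDist 𝕜 (x i ∘ σ j i) α :=
      sum_ite_empiricalDist 𝕜 (fun b : B j => b.1 i) (hx.localConfig j) α
    _ = empiricalDist 𝕜 (x i) α := by rw [empiricalDist_comp_perm]

variable [Nonempty S] {𝕜 : Type*} [Semifield 𝕜] [LinearOrder 𝕜] [IsStrictOrderedRing 𝕜]

theorem IsValidCover.empiricalDist_mem_pseudoconfigPolytope (hx : IsValidCover B σ x) :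
    (fun i => empiricalDist 𝕜 (x i), fun j => empiricalDist 𝕜 (hx.localConfig j)) ∈
      pseudoconfigPolytope 𝕜 B :=
  ⟨fun j => empiricalDist_nonneg 𝕜 (hx.localConfig j),
    fun j => sum_empiricalDist 𝕜 (hx.localConfig j),
    fun j i hij α => (hx.sum_ite_empiricalDist_localConfig 𝕜 j ⟨i, hij⟩ α).symm⟩

theorem stmt_14_general {R : Type*} [Preorder R] {cost : (∀ i, A i → 𝕜) → R}
    {opt : (∀ i, A i → 𝕜) × (∀ j, B j → 𝕜)}
    (hopt : IsMaxOn (fun gp => cost gp.1) (pseudoconfigPolytope 𝕜 B) opt)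
    (hx : IsValidCover B σ x) :
    cost (fun i => empiricalDist 𝕜 (x i)) ≤ cost opt.1 :=
  hopt hx.empiricalDist_mem_pseudoconfigPolytope

end Cover

/-- Receiver output is the lowest-cost pseudoconfiguration:
Suppose `(ḡ*, p*) ∈ Q` maximizes the cost `λ·g` over `Q`. Then for every
positive integer `M`, every choice of permutations `Π_{j,i}` of `S = {1,…,M}`,
and every valid cover configuration `x^{(M)}` of degree `M` with normalized
pseudoconfiguration vector `ḡ'`, one has `λ·g* ≥ λ·g'`. -/
theorem stmt_14
    {I : Type} [Fintype I] [DecidableEq I]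
    (A : I → Type) [∀ i, Fintype (A i)] [∀ i, DecidableEq (A i)]
    (hcard : ∀ i, 2 ≤ Fintype.card (A i))
    {L : Type} [Fintype L]
    (Ij : L → Finset I) (hIj : ∀ j, (Ij j).Nonempty)
    (Bj : ∀ j : L, Finset (∀ i : Ij j, A i.1))
    (Y : Finset I)
    (h : ∀ i, A i → ℝ) (hpos : ∀ i ∈ Y, ∀ a, 0 < h i a)
    -- the polytope Q, as a set of pairs (ḡ, p)
    (Q : Set ((∀ i : I, A i → ℝ) × (∀ j : L, {b // b ∈ Bj j} → ℝ)))
    (hQ : Q = {gp | (∀ j b, 0 ≤ gp.2 j b)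
      ∧ (∀ j : L, ∑ b : Bj j, gp.2 j b = 1)
      ∧ (∀ (j : L) (i : I) (hij : i ∈ Ij j) (α : A i),
          gp.1 i α = ∑ b : Bj j, if b.1 ⟨i, hij⟩ = α then gp.2 j b else 0)})
    -- the cost functional λ·g
    (cost : (∀ i : I, A i → ℝ) → ℝ)
    (hcost : ∀ g, cost g = ∑ i ∈ Y, ∑ α : A i, Real.log (h i α) * g i α)
    -- the LP optimum (ḡ*, p*)
    (gstar : ∀ i : I, A i → ℝ)
    (pstar : ∀ j : L, {b // b ∈ Bj j} → ℝ)
    (hmem : (gstar, pstar) ∈ Q)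
    (hmax : ∀ gp ∈ Q, cost gp.1 ≤ cost gstar) :
    ∀ (M : ℕ), 0 < M →
      ∀ (Pm : ∀ j : L, ∀ i : Ij j, Equiv.Perm (Fin M))
        (x : ∀ i : I, Fin M → A i),
        (∀ (j : L) (l : Fin M), (fun i : Ij j => x i.1 (Pm j i l)) ∈ Bj j) →
        ∀ (g' : ∀ i : I, A i → ℝ),
          (∀ (i : I) (α : A i),
            g' i α = ((univ.filter fun l : Fin M => x i l = α).card : ℝ) / M) →
          cost g' ≤ cost gstar := by
  intro M hM Pm x hx g' hg'
  have : Nonempty (Fin M) := Fin.pos_iff_nonempty.mp hM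
  obtain rfl : g' = fun i => empiricalDist ℝ (x i) := by
    funext i α
    rw [hg', empiricalDist, Fintype.card_fin]
  subst hQ
  exact stmt_14_general (opt := (gstar, pstar)) hmax (σ := Pm) hx
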